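/- arXiv:1104.0195 — 7 statements merged into one kernel-verified Lean document; each statement's English description precedes it below -/
import Mathlib

section
/- For every term M of Λ⊕, the set of distributions derivable for M in the inductive call-by-value small-step semantics is directed: if M ⇒v 𝒟 and M ⇒v ℰ, then there exists a distribution ℱ such that M ⇒v ℱ, 𝒟 ≤ ℱ and ℰ ≤ ℱ. -/
open scoped ENNReal

/-- Terms of Λ⊕ (and of Λ⊕⁺), in de Bruijn notation: variables, abstractions,
applications and binary (probabilistic) sums.  De Bruijn indices realize
"terms up to renaming of bound variables". -/
inductive Term : Type
  | var : ℕ → Term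
  | lam : Term → Term
  | app : Term → Term → Term
  | choice : Term → Term → Term
  deriving DecidableEq

namespace Term

/-- Values: variables and abstractions. -/
inductive IsValue : Term → Prop
  | var (n : ℕ) : IsValue (var n)
  | lam (M : Term) : IsValue (lam M)

/-- Boolean value test. -/
def isVal : Term → Bool
  | var _ => true
  | lam _ => true
  | _ => false

/-- Shifting of de Bruijn indices: add `d` to all indices `≥ c`. -/
def shift (d c : ℕ) : Term → Term
  | var n => if n < c then var n else var (n + d)
  | lam M => lam (shift d (c + 1) M)
  | app M N => app (shift d c M) (shift d c N)
  | choice M N => choice (shift d c M) (shift d c N)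

/-- Capture-avoiding substitution `M[j := N]` (the variable `j` is consumed and
higher indices are decremented, as in a β-step). -/
def subst : Term → ℕ → Term → Term
  | var n, j, N => if n = j then shift j 0 N else if j < n then var (n - 1) else var n
  | lam M, j, N => lam (subst M (j + 1) N)
  | app M L, j, N => app (subst M j N) (subst L j N)
  | choice M L, j, N => choice (subst M j N) (subst L j N)

/-- All free indices are `< n`. -/
def closedUnder : Term → ℕ → Prop
  | var m, n => m < n
  | lam M, n => closedUnder M (n + 1)
  | app M N, n => closedUnder M n ∧ closedUnder N n
  | choice M N, n => closedUnder M n ∧ closedUnder N n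

/-- Closed terms: no free variables. -/
def Closed (M : Term) : Prop := closedUnder M 0

end Term

/-- (Sub)distributions are represented as functions from terms into `ℝ≥0∞`;
genuine distributions (`IsDist`) are supported on values and have mass `≤ 1`. -/
abbrev PDist := Term → ℝ≥0∞

/-- The sum (total mass) `Σ𝒟` of a distribution. -/
noncomputable def dsum (D : PDist) : ℝ≥0∞ := ∑' M, D M

/-- The support of a distribution. -/
def dsupp (D : PDist) : Set Term := {M | D M ≠ 0}

/-- The everywhere-zero distribution `∅`. -/
noncomputable def dzero : PDist := fun _ => 0

/-- The Dirac distribution `{V^1}`. -/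
noncomputable def dirac (V : Term) : PDist := fun M => if M = V then 1 else 0

/-- Being a genuine (sub)probability distribution: supported on values, with
total mass at most one. -/
def IsDist (D : PDist) : Prop := (∀ M, D M ≠ 0 → M.IsValue) ∧ dsum D ≤ 1

/-- Call-by-value reduction `↦v`, relating a term to the (equiprobable) finite
sequence of its possible reducts. -/
inductive RedV : Term → List Term → Prop
  | beta {M V : Term} : V.IsValue → RedV (.app (.lam M) V) [M.subst 0 V]
  | choice {V W : Term} : V.IsValue → W.IsValue → RedV (.choice V W) [V, W]
  | appL {M N : Term} {Ls : List Term} :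
      RedV M Ls → RedV (.app M N) (Ls.map (fun L => .app L N))
  | appR {V M : Term} {Ns : List Term} :
      V.IsValue → RedV M Ns → RedV (.app V M) (Ns.map (fun L => .app V L))
  | choiceL {M N : Term} {Ls : List Term} :
      RedV M Ls → RedV (.choice M N) (Ls.map (fun L => .choice L N))
  | choiceR {V M : Term} {Ns : List Term} :
      V.IsValue → RedV M Ns → RedV (.choice V M) (Ns.map (fun L => .choice V L))

/-- Call-by-name reduction `↦n`. -/
inductive RedN : Term → List Term → Prop
  | beta {M N : Term} : RedN (.app (.lam M) N) [M.subst 0 N]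
  | choice {M N : Term} : RedN (.choice M N) [M, N]
  | appL {M N : Term} {Ls : List Term} :
      RedN M Ls → RedN (.app M N) (Ls.map (fun L => .app L N))

/-- The inductive small-step convergence relation `⇒`, parametric in the
underlying reduction relation: any term evaluates to `∅`; a value `V`
evaluates to `{V^1}`; and if `M ↦ N₁,…,Nₙ` and `Nᵢ ⇒ 𝒟ᵢ` then
`M ⇒ Σᵢ (1/n)𝒟ᵢ`. -/
inductive Conv (Red : Term → List Term → Prop) : Term → PDist → Prop
  | bot (M : Term) : Conv Red M dzero
  | val {V : Term} : V.IsValue → Conv Red V (dirac V)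
  | step {M : Term} {Ns : List Term} (Ds : Fin Ns.length → PDist) :
      Red M Ns → (∀ i, Conv Red (Ns.get i) (Ds i)) →
      Conv Red M (fun W => (∑ i, Ds i W) / (Ns.length : ℝ≥0∞))

/-- Call-by-value small-step convergence `⇒v`. -/
def SmallV : Term → PDist → Prop := Conv RedV

/-- Call-by-name small-step convergence `⇒n`. -/
def SmallN : Term → PDist → Prop := Conv RedN

/-- The small-step semantics `⟦M⟧`: the pointwise supremum of all distributions
derivable for `M`. -/
noncomputable def semOf (S : Term → PDist → Prop) (M : Term) : PDist :=
  fun W => ⨆ (D : PDist) (_ : S M D), D W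

/-- Call-by-value small-step semantics `⟦M⟧v`. -/
noncomputable def semV : Term → PDist := semOf SmallV

/-- Call-by-name small-step semantics `⟦M⟧n`. -/
noncomputable def semN : Term → PDist := semOf SmallN

/-- One-step unfolding of the divergence inference system: a value diverges
with probability `0`; if `M ↦ N₁,…,Nₙ` and `Nᵢ` diverges with probability
`pᵢ`, then `M` diverges with probability `Σᵢ (1/n)pᵢ`. -/
def DivStep (Red : Term → List Term → Prop) (R : Term → ℝ≥0∞ → Prop)
    (M : Term) (p : ℝ≥0∞) : Prop :=
  (M.IsValue ∧ p = 0) ∨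
    ∃ (Ns : List Term) (ps : Fin Ns.length → ℝ≥0∞),
      Red M Ns ∧ (∀ i, R (Ns.get i) (ps i)) ∧ p = (∑ i, ps i) / (Ns.length : ℝ≥0∞)

/-- The coinductively-defined divergence relation `⇓div`: the union of all
consistent relations between terms and probabilities in `[0,1]`. -/
def Diverges (Red : Term → List Term → Prop) (M : Term) (p : ℝ≥0∞) : Prop :=
  ∃ R : Term → ℝ≥0∞ → Prop,
    (∀ N q, R N q → q ≤ 1 ∧ DivStep Red R N q) ∧ R M p

/-- Call-by-value divergence `⇓div`. -/
def DivV : Term → ℝ≥0∞ → Prop := Diverges RedV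

/-- Call-by-name divergence `⇓div,n`. -/
def DivN : Term → ℝ≥0∞ → Prop := Diverges RedN

/-- One-step unfolding of the call-by-value big-step inference system. -/
def BigVStep (R : Term → PDist → Prop) (M : Term) (D : PDist) : Prop :=
  (M.IsValue ∧ D = dirac M) ∨
  (∃ (N L : Term) (E F : PDist) (G : Term → Term → PDist),
      M = .app N L ∧ R N E ∧ R L F ∧
      (∀ P V, E (.lam P) ≠ 0 → V.IsValue → F V ≠ 0 → R (P.subst 0 V) (G P V)) ∧
      D = fun W => ∑' (P : Term), ∑' (V : Term), E (.lam P) * F V * G P V W) ∨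
  (∃ (N L : Term) (E F : PDist),
      M = .choice N L ∧ R N E ∧ R L F ∧
      D = fun W => (E W * dsum F + F W * dsum E) / 2)

/-- The coinductive call-by-value big-step relation `⇓v`: the union of all
consistent relations between terms and distributions. -/
def BigV (M : Term) (D : PDist) : Prop :=
  ∃ R : Term → PDist → Prop,
    (∀ N E, R N E → IsDist E ∧ BigVStep R N E) ∧ R M D

/-- One-step unfolding of the call-by-name big-step inference system. -/
def BigNStep (R : Term → PDist → Prop) (M : Term) (D : PDist) : Prop :=
  (M.IsValue ∧ D = dirac M) ∨
  (∃ (N L : Term) (E : PDist) (F : Term → PDist),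
      M = .app N L ∧ R N E ∧
      (∀ P, E (.lam P) ≠ 0 → R (P.subst 0 L) (F P)) ∧
      D = fun W => ∑' (P : Term), E (.lam P) * F P W) ∨
  (∃ (N L : Term) (E F : PDist),
      M = .choice N L ∧ R N E ∧ R L F ∧ D = fun W => (E W + F W) / 2)

/-- The coinductive call-by-name big-step relation `⇓n`. -/
def BigN (M : Term) (D : PDist) : Prop :=
  ∃ R : Term → PDist → Prop,
    (∀ N E, R N E → IsDist E ∧ BigNStep R N E) ∧ R M D

/-- Big-step semantics `⟪M⟫`: the pointwise infimum of all distributions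
derivable for `M` in a big-step system. -/
noncomputable def bigSemOf (B : Term → PDist → Prop) (M : Term) : PDist :=
  fun W => ⨅ (D : PDist) (_ : B M D), D W


theorem RedV.not_value {M : Term} {Ns : List Term} (h : RedV M Ns) : ¬ M.IsValue := by
  intro hv
  cases hv <;> cases h

theorem RedV.det {M : Term} {Ns : List Term} (h : RedV M Ns) :
    ∀ {Ks : List Term}, RedV M Ks → Ns = Ks := by
  induction h with
  | beta hV =>
    intro Ks h'
    cases h' with
    | beta _ => rfl
    | appL h => exact absurd (Term.IsValue.lam _) h.not_value
    | appR _ h => exact absurd hV h.not_value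
  | choice hV hW =>
    intro Ks h'
    cases h' with
    | choice _ _ => rfl
    | choiceL h => exact absurd hV h.not_value
    | choiceR _ h => exact absurd hW h.not_value
  | appL h ih =>
    intro Ks h'
    cases h' with
    | beta _ => exact absurd (Term.IsValue.lam _) h.not_value
    | appL h2 => rw [ih h2]
    | appR hv _ => exact absurd hv h.not_value
  | appR hv h ih =>
    intro Ks h'
    cases h' with
    | beta hV => exact absurd hV h.not_value
    | appL h2 => exact absurd hv h2.not_value
    | appR _ h2 => rw [ih h2]
  | choiceL h ih =>
    intro Ks h'
    cases h' with
    | choice hV _ => exact absurd hV h.not_value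
    | choiceL h2 => rw [ih h2]
    | choiceR hv _ => exact absurd hv h.not_value
  | choiceR hv h ih =>
    intro Ks h'
    cases h' with
    | choice _ hW => exact absurd hW h.not_value
    | choiceL h2 => exact absurd hv h2.not_value
    | choiceR _ h2 => rw [ih h2]

theorem conv_directed_aux {M : Term} {D : PDist} (hD : Conv RedV M D) :
    ∀ E : PDist, Conv RedV M E → ∃ F : PDist, Conv RedV M F ∧ D ≤ F ∧ E ≤ F := by
  induction hD with
  | bot M => exact fun E hE => ⟨E, hE, fun _ => zero_le, le_rfl⟩
  | val hV =>
    intro E hE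
    cases hE with
    | bot => exact ⟨_, Conv.val hV, le_rfl, fun _ => zero_le⟩
    | val _ => exact ⟨_, Conv.val hV, le_rfl, le_rfl⟩
    | step Ds hr _ => exact absurd hV hr.not_value
  | step Ds hr hc ih =>
    intro E hE
    cases hE with
    | bot => exact ⟨_, Conv.step Ds hr hc, le_rfl, fun _ => zero_le⟩
    | val hV => exact absurd hV hr.not_value
    | step Es hr' hc' =>
      obtain rfl := hr.det hr'
      choose Fs h1 h2 h3 using fun i => ih i (Es i) (hc' i)
      exact ⟨_, Conv.step Fs hr h1,
        fun W => ENNReal.div_le_div_right (Finset.sum_le_sum fun i _ => h2 i W) _,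
        fun W => ENNReal.div_le_div_right (Finset.sum_le_sum fun i _ => h3 i W) _⟩

/-- the set of distributions derivable for `M` in the inductive
call-by-value small-step semantics is directed. -/
theorem smallV_directed (M : Term) (D E : PDist)
    (hD : SmallV M D) (hE : SmallV M E) :
    ∃ F : PDist, SmallV M F ∧ D ≤ F ∧ E ≤ F :=
  conv_directed_aux hD E hE
end

section
/- For every closed term M of Λ⊕, if M ⇓div p and M ⇒v 𝒟, then p + Σ𝒟 ≤ 1. -/
open scoped ENNReal

theorem redV_not_value {M : Term} {Ls : List Term} (h : RedV M Ls) : ¬ M.IsValue := by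
  intro hv
  cases h <;> cases hv

theorem redV_det {M : Term} {Ls : List Term} (h : RedV M Ls) :
    ∀ {Ks : List Term}, RedV M Ks → Ks = Ls := by
  induction h with
  | beta hV =>
    intro Ks h2
    cases h2 with
    | beta _ => rfl
    | appL h => exact absurd (.lam _) (redV_not_value h)
    | appR _ h => exact absurd hV (redV_not_value h)
  | choice hV hW =>
    intro Ks h2
    cases h2 with
    | choice _ _ => rfl
    | choiceL h => exact absurd hV (redV_not_value h)
    | choiceR _ h => exact absurd hW (redV_not_value h)
  | appL h ih =>
    intro Ks h2
    cases h2 with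
    | beta _ => exact absurd (.lam _) (redV_not_value h)
    | appL h' => rw [ih h']
    | appR hV _ => exact absurd hV (redV_not_value h)
  | appR hV h ih =>
    intro Ks h2
    cases h2 with
    | beta hV' => exact absurd hV' (redV_not_value h)
    | appL h' => exact absurd hV (redV_not_value h')
    | appR _ h' => rw [ih h']
  | choiceL h ih =>
    intro Ks h2
    cases h2 with
    | choice hV _ => exact absurd hV (redV_not_value h)
    | choiceL h' => rw [ih h']
    | choiceR hV _ => exact absurd hV (redV_not_value h)
  | choiceR hV h ih =>
    intro Ks h2
    cases h2 with
    | choice _ hW => exact absurd hW (redV_not_value h)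
    | choiceL h' => exact absurd hV (redV_not_value h')
    | choiceR _ h' => rw [ih h']

theorem dsum_avg {n : ℕ} (Ds : Fin n → PDist) :
    dsum (fun W => (∑ i, Ds i W) / (n : ℝ≥0∞)) = (∑ i, dsum (Ds i)) / (n : ℝ≥0∞) := by
  simp only [dsum, div_eq_mul_inv]
  rw [ENNReal.tsum_mul_right, Summable.tsum_finsetSum (fun _ _ => ENNReal.summable)]

theorem div_add_conv_aux (R : Term → ℝ≥0∞ → Prop)
    (hR : ∀ N q, R N q → q ≤ 1 ∧ DivStep RedV R N q) {M : Term} {D : PDist}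
    (h : Conv RedV M D) : ∀ p, R M p → p + dsum D ≤ 1 := by
  induction h with
  | bot M =>
    intro p hp
    simpa [dsum, dzero] using (hR _ _ hp).1
  | val hV =>
    intro p hp
    rcases (hR _ _ hp).2 with ⟨_, rfl⟩ | ⟨Ns, ps, hr, _⟩
    · simp [dsum, dirac, tsum_ite_eq]
    · exact absurd hV (redV_not_value hr)
  | @step M Ns Ds hred _ ih =>
    intro p hp
    rcases (hR _ _ hp).2 with ⟨hV, _⟩ | ⟨Ks, ps, hr, hps, rfl⟩
    · exact absurd hV (redV_not_value hred)
    · obtain rfl := redV_det hred hr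
      rw [dsum_avg, ← ENNReal.add_div, ← Finset.sum_add_distrib]
      refine le_trans (ENNReal.div_le_div_right
        (Finset.sum_le_sum (fun i _ => ih i _ (hps i))) _) ?_
      simpa using ENNReal.div_self_le_one

/-- divergence and convergence probabilities together never
exceed `1`. -/
theorem divV_add_conv_le_one (M : Term) (hM : M.Closed) (p : ℝ≥0∞) (D : PDist)
    (hdiv : DivV M p) (hconv : SmallV M D) :
    p + dsum D ≤ 1 := by
  obtain ⟨R, hR, hp⟩ := hdiv
  exact div_add_conv_aux R hR hconv p hp
end

section
/- Let M be a closed term of Λ⊕. (1) If M is a value V and M ⇒v 𝒟, then 𝒟 ≤ {V^1}. (2) If M is an application N L, and N ⇒v ℰ, L ⇒v ℱ, and for every abstraction λx.P ∈ supp(ℰ) and value V ∈ supp(ℱ) one has P[V/x] ⇒v 𝒢_{P,V}, then there exists a distribution 𝒟 such that M ⇒v 𝒟 and 𝒟 ≥ Σ_{λx.P∈supp(ℰ), V∈supp(ℱ)} ℰ(λx.P)·ℱ(V)·𝒢_{P,V}. (3) If M is a sum N ⊕ L, and N ⇒v ℰ and L ⇒v ℱ, then there exists a distribution 𝒟 such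 that M ⇒v 𝒟 and 𝒟 ≥ ½·ℰ·(Σℱ) + ½·ℱ·(Σℰ). -/
open scoped ENNReal

theorem Conv.step_map {Red : Term → List Term → Prop} {M : Term} {Ns : List Term}
    (f : Term → Term) (hr : Red M (Ns.map f)) (H : Fin Ns.length → PDist)
    (h : ∀ i, ∃ D, Conv Red (f (Ns.get i)) D ∧ H i ≤ D) :
    ∃ D, Conv Red M D ∧ (fun W => (∑ i, H i W) / (Ns.length : ℝ≥0∞)) ≤ D := by
  choose D hD hle using h
  have hlen : (Ns.map f).length = Ns.length := by simp
  refine ⟨_, Conv.step (fun i => D (Fin.cast hlen i)) hr ?_, ?_⟩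
  · intro i
    have := hD (Fin.cast hlen i)
    simpa using this
  · intro W
    have e : ∑ i : Fin (Ns.map f).length, D (Fin.cast hlen i) W = ∑ i, D i W :=
      Fintype.sum_equiv (finCongr hlen) _ _ (fun i => rfl)
    simp only [e, hlen]
    exact ENNReal.div_le_div_right (Finset.sum_le_sum fun i _ => hle i W) _

theorem avg_ne_zero {n : ℕ} (Ds : Fin n → PDist) (i : Fin n) (W : Term)
    (h : Ds i W ≠ 0) : (∑ i, Ds i W) / (n : ℝ≥0∞) ≠ 0 := by
  intro h0
  rw [ENNReal.div_eq_zero_iff] at h0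
  rcases h0 with h0 | h0
  · exact h (Finset.sum_eq_zero_iff.mp h0 i (Finset.mem_univ i))
  · exact ENNReal.natCast_ne_top n h0

theorem tsum_avg {n : ℕ} {α : Type*} (f : Fin n → α → ℝ≥0∞) :
    ∑' a, (∑ i, f i a) / (n : ℝ≥0∞) = (∑ i, ∑' a, f i a) / (n : ℝ≥0∞) := by
  simp only [div_eq_mul_inv]
  rw [ENNReal.tsum_mul_right, Summable.tsum_finsetSum (fun _ _ => ENNReal.summable)]

theorem avg_mul {n : ℕ} (f : Fin n → ℝ≥0∞) (c : ℝ≥0∞) :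
    (∑ i, f i) / (n : ℝ≥0∞) * c = (∑ i, f i * c) / (n : ℝ≥0∞) := by
  simp only [div_eq_mul_inv, Finset.sum_mul]
  refine Finset.sum_congr rfl fun i _ => ?_
  ring

theorem dsum_dzero : dsum dzero = 0 := by simp [dsum, dzero]

theorem dsum_dirac (V : Term) : dsum (dirac V) = 1 := by
  simp [dsum, dirac]

/-- Application with a λ-abstraction in function position. -/
theorem smallV_app_lam (P L : Term) (F : PDist) (G : Term → PDist) (hL : Conv RedV L F)
    (hG : ∀ V, V.IsValue → F V ≠ 0 → Conv RedV (P.subst 0 V) (G V)) :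
    ∃ D, Conv RedV (.app (.lam P) L) D ∧ (fun W => ∑' V, F V * G V W) ≤ D := by
  induction hL with
  | bot M => exact ⟨_, Conv.bot _, by intro W; simp [dzero]⟩
  | @val U hU =>
    have hc := hG U hU (by simp [dirac])
    refine ⟨_, Conv.step (fun _ => G U) (RedV.beta hU) ?_, ?_⟩
    · intro i
      simpa using hc
    · intro W
      simp [dirac]
  | @step M Ns Ds hr hD ih =>
    have := Conv.step_map (fun L => Term.app (.lam P) L) (RedV.appR (.lam P) hr)
      (fun i W => ∑' V, Ds i V * G V W)
      (fun i => ih i fun V hV hne => hG V hV (avg_ne_zero Ds i V hne))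
    obtain ⟨D, h1, h2⟩ := this
    refine ⟨D, h1, le_trans (fun W => ?_) h2⟩
    simp only [avg_mul, tsum_avg, le_refl]

theorem smallV_app (N L : Term) (E F : PDist) (G : Term → Term → PDist)
    (hN : Conv RedV N E) (hL : Conv RedV L F)
    (hG : ∀ P V, E (.lam P) ≠ 0 → V.IsValue → F V ≠ 0 →
      Conv RedV (P.subst 0 V) (G P V)) :
    ∃ D, Conv RedV (.app N L) D ∧
      (fun W => ∑' (P : Term), ∑' (V : Term), E (.lam P) * F V * G P V W) ≤ D := by
  induction hN with
  | bot M => exact ⟨_, Conv.bot _, by intro W; simp [dzero]⟩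
  | @val U hU =>
    cases hU with
    | var n => exact ⟨_, Conv.bot _, by intro W; simp [dirac]⟩
    | lam P =>
      obtain ⟨D, h1, h2⟩ := smallV_app_lam P L F (G P) hL
        (fun V hV hne => hG P V (by simp [dirac]) hV hne)
      refine ⟨D, h1, le_trans (fun W => ?_) h2⟩
      simp only [dirac, Term.lam.injEq]
      rw [tsum_eq_single P]
      · simp
      · intro Q hQ
        simp [hQ]
  | @step M Ns Ds hr hD ih =>
    obtain ⟨D, h1, h2⟩ := Conv.step_map (fun N => Term.app N L) (RedV.appL hr)
      (fun i W => ∑' (P : Term), ∑' (V : Term), Ds i (.lam P) * F V * G P V W)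
      (fun i => ih i fun P V hP => hG P V (avg_ne_zero Ds i _ hP))
    refine ⟨D, h1, le_trans (fun W => ?_) h2⟩
    simp only [avg_mul, tsum_avg, le_refl]

theorem smallV_choice_val (U L : Term) (hU : U.IsValue) (F : PDist) (hL : Conv RedV L F) :
    ∃ D, Conv RedV (.choice U L) D ∧ (fun W => (dirac U W * dsum F + F W) / 2) ≤ D := by
  induction hL with
  | bot M => exact ⟨_, Conv.bot _, by intro W; simp [dsum_dzero]; simp [dzero]⟩
  | @val V hV =>
    refine ⟨_, Conv.step (fun i => dirac ([U, V].get i)) (RedV.choice hU hV) ?_, ?_⟩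
    · intro i
      refine Conv.val ?_
      match i with
      | ⟨0, _⟩ => exact hU
      | ⟨1, _⟩ => exact hV
    · intro W
      have : ∑ i : Fin [U, V].length, dirac ([U, V].get i) W = dirac U W + dirac V W :=
        Fin.sum_univ_two _
      simp only [this, dsum_dirac]
      simp
  | @step M Ns Ds hr hD ih =>
    obtain ⟨D, h1, h2⟩ := Conv.step_map (fun L => Term.choice U L) (RedV.choiceR hU hr)
      _ ih
    refine ⟨D, h1, le_trans (fun W => ?_) h2⟩
    simp only [dsum, tsum_avg]
    simp only [div_eq_mul_inv, ← Finset.sum_mul, Finset.sum_add_distrib,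
      ← Finset.mul_sum]
    apply le_of_eq
    ring

theorem smallV_choice (N L : Term) (E F : PDist) (hN : Conv RedV N E) (hL : Conv RedV L F) :
    ∃ D, Conv RedV (.choice N L) D ∧
      (fun W => (E W * dsum F + F W * dsum E) / 2) ≤ D := by
  induction hN with
  | bot M => exact ⟨_, Conv.bot _, by intro W; simp [dsum_dzero]; simp [dzero]⟩
  | @val U hU =>
    simpa [dsum_dirac] using smallV_choice_val U L hU F hL
  | @step M Ns Ds hr hD ih =>
    obtain ⟨D, h1, h2⟩ := Conv.step_map (fun N => Term.choice N L) (RedV.choiceL hr)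
      _ ih
    refine ⟨D, h1, le_trans (fun W => ?_) h2⟩
    simp only [dsum, tsum_avg]
    simp only [div_eq_mul_inv, ← Finset.sum_mul, Finset.sum_add_distrib,
      ← Finset.mul_sum]
    apply le_of_eq
    ring

/-- structural (un)folding properties of the inductive
call-by-value small-step semantics. -/
theorem smallV_structural (M : Term) (hM : M.Closed) :
    (M.IsValue → ∀ D : PDist, SmallV M D → D ≤ dirac M) ∧
    (∀ N L : Term, M = .app N L →
      ∀ (E F : PDist) (G : Term → Term → PDist), SmallV N E → SmallV L F →
        (∀ P V, E (.lam P) ≠ 0 → V.IsValue → F V ≠ 0 →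
          SmallV (P.subst 0 V) (G P V)) →
        ∃ D : PDist, SmallV M D ∧
          (fun W => ∑' (P : Term), ∑' (V : Term), E (.lam P) * F V * G P V W) ≤ D) ∧
    (∀ N L : Term, M = .choice N L → ∀ E F : PDist, SmallV N E → SmallV L F →
      ∃ D : PDist, SmallV M D ∧
        (fun W => (E W * dsum F + F W * dsum E) / 2) ≤ D) := by
  refine ⟨?_, ?_, ?_⟩
  · intro hv D hD
    cases hD with
    | bot => intro W; exact zero_le
    | val => exact le_refl _
    | step Ds hr _ => exact absurd hv hr.not_value
  · rintro N L rfl E F G hN hL hG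
    exact smallV_app N L E F G hN hL hG
  · rintro N L rfl E F hN hL
    exact smallV_choice N L E F hN hL
end

section
/- For every closed term M of Λ⊕, if M ⇒v 𝒟 and M ⇓v ℰ, then 𝒟 ≤ ℰ: every distribution derivable in the inductive call-by-value small-step semantics is dominated by every distribution derivable in the coinductive call-by-value big-step semantics. -/
open scoped ENNReal

namespace BigVProof

noncomputable def appD (E F : PDist) (G : Term → Term → PDist) : PDist :=
  fun W => ∑' (P : Term), ∑' (V : Term), E (.lam P) * F V * G P V W

noncomputable def choiceD (E F : PDist) : PDist :=
  fun W => (E W * dsum F + F W * dsum E) / 2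

/-- average of a list of distributions -/
noncomputable def avg (Ls : List Term) (f : Term → PDist) : PDist :=
  fun W => (Ls.map (fun L => f L W)).sum * (Ls.length : ℝ≥0∞)⁻¹

theorem step_mono {R S : Term → PDist → Prop} (h : ∀ M D, R M D → S M D)
    {M : Term} {D : PDist} (hs : BigVStep R M D) : BigVStep S M D := by
  rcases hs with h1 | ⟨N, L, E, F, G, h1, h2, h3, h4, h5⟩ | ⟨N, L, E, F, h1, h2, h3, h4⟩
  · exact Or.inl h1
  · exact Or.inr (Or.inl ⟨N, L, E, F, G, h1, h _ _ h2, h _ _ h3,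
      fun P V a b c => h _ _ (h4 P V a b c), h5⟩)
  · exact Or.inr (Or.inr ⟨N, L, E, F, h1, h _ _ h2, h _ _ h3, h4⟩)

theorem big_dist {M : Term} {D : PDist} (h : BigV M D) : IsDist D := by
  obtain ⟨R, hR, hM⟩ := h
  exact (hR _ _ hM).1

theorem big_step {M : Term} {D : PDist} (h : BigV M D) : BigVStep BigV M D := by
  obtain ⟨R, hR, hM⟩ := h
  exact step_mono (fun N E hN => ⟨R, hR, hN⟩) (hR _ _ hM).2

theorem big_intro {M : Term} {D : PDist} (hd : IsDist D) (hs : BigVStep BigV M D) :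
    BigV M D := by
  refine ⟨fun N E => IsDist E ∧ BigVStep BigV N E, ?_, hd, hs⟩
  rintro N E ⟨h1, h2⟩
  exact ⟨h1, step_mono (fun M D h => ⟨big_dist h, big_step h⟩) h2⟩

theorem big_val {V : Term} {D : PDist} (hV : V.IsValue) (h : BigV V D) : D = dirac V := by
  rcases big_step h with h1 | ⟨N, L, E, F, G, h1, _⟩ | ⟨N, L, E, F, h1, _⟩
  · exact h1.2
  · subst h1; cases hV
  · subst h1; cases hV

theorem dsum_dirac (V : Term) : dsum (dirac V) = 1 := by
  unfold dsum dirac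
  rw [tsum_eq_single V] <;> simp +contextual

theorem val_big {V : Term} (hV : V.IsValue) : BigV V (dirac V) := by
  refine big_intro ⟨?_, (dsum_dirac V).le⟩ (Or.inl ⟨hV, rfl⟩)
  intro M hM
  by_cases h : M = V
  · exact h ▸ hV
  · simp [dirac, h] at hM

theorem big_app {N L : Term} {E F : PDist} {G : Term → Term → PDist}
    (hN : BigV N E) (hL : BigV L F)
    (hG : ∀ P V, E (.lam P) ≠ 0 → V.IsValue → F V ≠ 0 → BigV (P.subst 0 V) (G P V)) :
    BigV (.app N L) (appD E F G) := by
  refine big_intro ⟨?_, ?_⟩ (Or.inr (Or.inl ⟨N, L, E, F, G, rfl, hN, hL, hG, rfl⟩))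
  · intro W hW
    by_contra hc
    apply hW
    simp only [appD, ENNReal.tsum_eq_zero, mul_eq_zero]
    intro P V
    by_contra! h
    exact hc ((big_dist (hG P V h.1.1 ((big_dist hL).1 _ h.1.2) h.1.2)).1 _ h.2)
  · unfold dsum appD
    rw [ENNReal.tsum_comm]
    calc _ ≤ ∑' P : Term, E (.lam P) := by
          refine ENNReal.tsum_le_tsum fun P => ?_
          rw [ENNReal.tsum_comm]
          calc _ ≤ ∑' V : Term, E (.lam P) * F V := by
                refine ENNReal.tsum_le_tsum fun V => ?_
                rw [ENNReal.tsum_mul_left]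
                by_cases h : E (.lam P) = 0
                · simp [h]
                by_cases h' : F V = 0
                · simp [h']
                exact mul_le_of_le_one_right' (big_dist (hG P V h ((big_dist hL).1 _ h') h')).2
            _ ≤ _ := by
                rw [ENNReal.tsum_mul_left]
                exact mul_le_of_le_one_right' (big_dist hL).2
      _ ≤ dsum E := ENNReal.tsum_comp_le_tsum_of_injective
          (fun a b h => by cases h; rfl) E
      _ ≤ 1 := (big_dist hN).2

theorem big_choice {N L : Term} {E F : PDist}
    (hN : BigV N E) (hL : BigV L F) : BigV (.choice N L) (choiceD E F) := by
  refine big_intro ⟨?_, ?_⟩ (Or.inr (Or.inr ⟨N, L, E, F, rfl, hN, hL, rfl⟩))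
  · intro W hW
    by_contra hc
    apply hW
    have h1 : E W = 0 := by
      by_contra h; exact hc ((big_dist hN).1 _ h)
    have h2 : F W = 0 := by
      by_contra h; exact hc ((big_dist hL).1 _ h)
    simp [choiceD, h1, h2]
  · have h1 := (big_dist hN).2
    have h2 := (big_dist hL).2
    have : dsum (choiceD E F) = (dsum E * dsum F + dsum F * dsum E) / 2 := by
      conv_lhs => unfold dsum choiceD
      simp only [div_eq_mul_inv]
      rw [ENNReal.tsum_mul_right, ENNReal.tsum_add, ENNReal.tsum_mul_right,
        ENNReal.tsum_mul_right]
      rfl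
    rw [this]
    apply ENNReal.div_le_of_le_mul
    calc _ ≤ (1 : ℝ≥0∞) * 1 + 1 * 1 := by gcongr
      _ = 1 * 2 := by norm_num

theorem appD_list_left (Ls : List Term) (f : Term → PDist) (c : ℝ≥0∞) (F : PDist)
    (G : Term → Term → PDist) (W : Term) :
    appD (fun X => (Ls.map (fun L => f L X)).sum * c) F G W
      = (Ls.map (fun L => appD (f L) F G W)).sum * c := by
  induction Ls with
  | nil => simp [appD]
  | cons a l ih =>
    simp only [List.map_cons, List.sum_cons, add_mul, ← ih]
    simp only [appD, add_mul, ENNReal.tsum_add, ← ENNReal.tsum_mul_right]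
    congr 1
    refine tsum_congr fun P => tsum_congr fun V => ?_
    ring

theorem appD_list_right (Ls : List Term) (f : Term → PDist) (c : ℝ≥0∞) (E : PDist)
    (G : Term → Term → PDist) (W : Term) :
    appD E (fun X => (Ls.map (fun L => f L X)).sum * c) G W
      = (Ls.map (fun L => appD E (f L) G W)).sum * c := by
  induction Ls with
  | nil => simp [appD]
  | cons a l ih =>
    simp only [List.map_cons, List.sum_cons, add_mul, ← ih]
    simp only [appD, add_mul, mul_add, ENNReal.tsum_add, ← ENNReal.tsum_mul_right]
    congr 1
    refine tsum_congr fun P => tsum_congr fun V => ?_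
    ring

theorem choiceD_comm (E F : PDist) : choiceD E F = choiceD F E := by
  funext W; simp only [choiceD, add_comm]

theorem choiceD_list_left (Ls : List Term) (f : Term → PDist) (c : ℝ≥0∞) (F : PDist)
    (W : Term) :
    choiceD (fun X => (Ls.map (fun L => f L X)).sum * c) F W
      = (Ls.map (fun L => choiceD (f L) F W)).sum * c := by
  induction Ls with
  | nil => simp [choiceD, dsum]
  | cons a l ih =>
    simp only [List.map_cons, List.sum_cons, add_mul, ← ih]
    simp only [choiceD, dsum, ENNReal.tsum_add, ENNReal.tsum_mul_right, div_eq_mul_inv]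
    ring

theorem avg_ne_zero {Ls : List Term} {f : Term → PDist} {L : Term} (hL : L ∈ Ls) {X : Term}
    (h : f L X ≠ 0) : avg Ls f X ≠ 0 := by
  intro h0
  rcases mul_eq_zero.1 h0 with h1 | h1
  · rw [List.sum_eq_zero_iff] at h1
    exact h (h1 _ (List.mem_map.2 ⟨L, hL, rfl⟩))
  · simp at h1

/-- decompose a term -/
def left : Term → Term
  | .app M _ => M
  | .choice M _ => M
  | M => M

def right : Term → Term
  | .app _ M => M
  | .choice _ M => M
  | M => M

theorem inv_app {N L : Term} {D : PDist} (h : BigV (.app N L) D) :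
    ∃ E F G, BigV N E ∧ BigV L F ∧
      (∀ P V, E (.lam P) ≠ 0 → V.IsValue → F V ≠ 0 → BigV (P.subst 0 V) (G P V)) ∧
      D = appD E F G := by
  rcases big_step h with ⟨h1, _⟩ | ⟨N, L, E, F, G, h1, h2, h3, h4, h5⟩ | ⟨N, L, E, F, h1, _⟩
  · cases h1
  · cases h1; exact ⟨E, F, G, h2, h3, h4, h5⟩
  · cases h1

theorem inv_choice {N L : Term} {D : PDist} (h : BigV (.choice N L) D) :
    ∃ E F, BigV N E ∧ BigV L F ∧ D = choiceD E F := by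
  rcases big_step h with ⟨h1, _⟩ | ⟨N, L, E, F, G, h1, _⟩ | ⟨N, L, E, F, h1, h2, h3, h4⟩
  · cases h1
  · cases h1
  · cases h1; exact ⟨E, F, h2, h3, h4⟩

theorem red_big {M : Term} {Ns : List Term} (hr : RedV M Ns) :
    ∀ D, BigV M D → ∃ f : Term → PDist, (∀ L ∈ Ns, BigV L (f L)) ∧ D = avg Ns f := by
  induction hr with
  | @beta M V hV =>
    intro D hD
    obtain ⟨E, F, G, hE, hF, hG, rfl⟩ := inv_app hD
    obtain rfl := big_val (.lam M) hE
    obtain rfl := big_val hV hF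
    refine ⟨fun _ => G M V, ?_, ?_⟩
    · simp only [List.mem_singleton, forall_eq]
      exact hG M V (by simp [dirac]) hV (by simp [dirac])
    · funext W
      simp only [appD, avg, dirac]
      rw [tsum_eq_single M, tsum_eq_single V]
      · simp
      · intro b hb; simp [hb]
      · intro b hb; simp [hb]
  | @choice V W hV hW =>
    intro D hD
    obtain ⟨E, F, hE, hF, rfl⟩ := inv_choice hD
    obtain rfl := big_val hV hE
    obtain rfl := big_val hW hF
    refine ⟨dirac, ?_, ?_⟩
    · simp only [List.mem_cons, List.not_mem_nil, or_false, forall_eq_or_imp, forall_eq]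
      exact ⟨val_big hV, val_big hW⟩
    · funext X
      simp [choiceD, avg, dsum_dirac, div_eq_mul_inv]
  | @appL M N Ls hr ih =>
    intro D hD
    obtain ⟨E, F, G, hE, hF, hG, rfl⟩ := inv_app hD
    obtain ⟨f, hf, rfl⟩ := ih E hE
    refine ⟨fun T => appD (f (left T)) F G, ?_, ?_⟩
    · simp only [List.mem_map, forall_exists_index, and_imp, forall_apply_eq_imp_iff₂, left]
      intro L hL
      exact big_app (hf L hL) hF fun P V h1 h2 h3 => hG P V (avg_ne_zero hL h1) h2 h3
    · funext W
      simp only [avg, List.map_map, Function.comp_def, left, List.length_map]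
      exact appD_list_left Ls f (Ls.length : ℝ≥0∞)⁻¹ F G W
  | @appR V M Ls hV hr ih =>
    intro D hD
    obtain ⟨E, F, G, hE, hF, hG, rfl⟩ := inv_app hD
    obtain ⟨f, hf, rfl⟩ := ih F hF
    refine ⟨fun T => appD E (f (right T)) G, ?_, ?_⟩
    · simp only [List.mem_map, forall_exists_index, and_imp, forall_apply_eq_imp_iff₂, right]
      intro L hL
      exact big_app hE (hf L hL) fun P V h1 h2 h3 => hG P V h1 h2 (avg_ne_zero hL h3)
    · funext W
      simp only [avg, List.map_map, Function.comp_def, right, List.length_map]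
      exact appD_list_right Ls f (Ls.length : ℝ≥0∞)⁻¹ E G W
  | @choiceL M N Ls hr ih =>
    intro D hD
    obtain ⟨E, F, hE, hF, rfl⟩ := inv_choice hD
    obtain ⟨f, hf, rfl⟩ := ih E hE
    refine ⟨fun T => choiceD (f (left T)) F, ?_, ?_⟩
    · simp only [List.mem_map, forall_exists_index, and_imp, forall_apply_eq_imp_iff₂, left]
      intro L hL
      exact big_choice (hf L hL) hF
    · funext W
      simp only [avg, List.map_map, Function.comp_def, left, List.length_map]
      exact choiceD_list_left Ls f (Ls.length : ℝ≥0∞)⁻¹ F W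
  | @choiceR V M Ls hV hr ih =>
    intro D hD
    obtain ⟨E, F, hE, hF, rfl⟩ := inv_choice hD
    obtain ⟨f, hf, rfl⟩ := ih F hF
    refine ⟨fun T => choiceD (f (right T)) E, ?_, ?_⟩
    · simp only [List.mem_map, forall_exists_index, and_imp, forall_apply_eq_imp_iff₂, right]
      intro L hL
      rw [choiceD_comm]
      exact big_choice hE (hf L hL)
    · funext W
      rw [choiceD_comm]
      simp only [avg, List.map_map, Function.comp_def, right, List.length_map]
      exact choiceD_list_left Ls f (Ls.length : ℝ≥0∞)⁻¹ E W

theorem main {M : Term} {D : PDist} (hs : Conv RedV M D) : ∀ E, BigV M E → D ≤ E := by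
  induction hs with
  | bot M => intro E _ W; exact zero_le
  | val hV => intro E hE; exact (big_val hV hE).ge
  | @step M Ns Ds hr _ ih =>
    intro E hE
    obtain ⟨f, hf, rfl⟩ := red_big hr E hE
    intro W
    simp only [avg, div_eq_mul_inv]
    gcongr
    have : (Ns.map (fun L => f L W)).sum = ∑ i : Fin Ns.length, f (Ns.get i) W := by
      rw [← Fin.sum_univ_fun_getElem]; rfl
    rw [this]
    exact Finset.sum_le_sum fun i _ => ih i _ (hf _ (List.get_mem _ _)) W

end BigVProof

/-- big-step dominates small-step, call-by-value. -/
theorem bigV_dominates_smallV (M : Term) (hM : M.Closed) (D E : PDist)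
    (hsmall : SmallV M D) (hbig : BigV M E) :
    D ≤ E := by
  exact BigVProof.main hsmall E hbig
end

section
/- For every closed term M of Λ⊕, the judgment M ⇓v ⟦M⟧v holds: the call-by-value small-step semantics of M is itself derivable in the coinductive call-by-value big-step semantics. -/
open scoped ENNReal

namespace SemAux

open Term

theorem isVal_iff (M : Term) : M.isVal = true ↔ M.IsValue := by
  constructor
  · intro h
    cases M with
    | var n => exact .var n
    | lam M => exact .lam M
    | app _ _ => simp [Term.isVal] at h
    | choice _ _ => simp [Term.isVal] at h
  · intro h
    cases h <;> rfl

/-- Contraction of an application of two values. -/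
def redex : Term → Term → List Term
  | .lam P, V => [P.subst 0 V]
  | _, _ => []

/-- The reducts of a term (empty list if there is none). -/
def nxt : Term → List Term
  | .var _ => []
  | .lam _ => []
  | .app N L =>
      if N.isVal then (if L.isVal then redex N L else (nxt L).map (fun X => .app N X))
      else (nxt N).map (fun X => .app X L)
  | .choice N L =>
      if N.isVal then (if L.isVal then [N, L] else (nxt L).map (fun X => .choice N X))
      else (nxt N).map (fun X => .choice X L)

theorem nxt_val {V : Term} (h : V.isVal = true) : nxt V = [] := by
  cases V <;> simp_all [Term.isVal, nxt]

theorem isVal_lam (P : Term) : (Term.lam P).isVal = true := rfl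

theorem isVal_var (n : ℕ) : (Term.var n).isVal = true := rfl

theorem RedV_nxt {M : Term} {Ns : List Term} (h : RedV M Ns) : nxt M = Ns ∧ Ns ≠ [] := by
  induction h with
  | beta hV => simp [nxt, (isVal_iff _).2 hV, redex, isVal_lam]
  | choice hV hW => simp [nxt, (isVal_iff _).2 hV, (isVal_iff _).2 hW]
  | @appL M N Ls h ih =>
    have : M.isVal = false := by
      by_contra hc
      rw [nxt_val (by simpa using hc)] at ih
      exact ih.2 ih.1.symm
    simp [nxt, this, ih.1, ih.2]
  | @appR V M Ns hV h ih =>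
    have : M.isVal = false := by
      by_contra hc
      rw [nxt_val (by simpa using hc)] at ih
      exact ih.2 ih.1.symm
    simp [nxt, this, ih.1, ih.2, (isVal_iff _).2 hV]
  | @choiceL M N Ls h ih =>
    have : M.isVal = false := by
      by_contra hc
      rw [nxt_val (by simpa using hc)] at ih
      exact ih.2 ih.1.symm
    simp [nxt, this, ih.1, ih.2]
  | @choiceR V M Ns hV h ih =>
    have : M.isVal = false := by
      by_contra hc
      rw [nxt_val (by simpa using hc)] at ih
      exact ih.2 ih.1.symm
    simp [nxt, this, ih.1, ih.2, (isVal_iff _).2 hV]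

theorem nxt_RedV (M : Term) (h : nxt M ≠ []) : RedV M (nxt M) := by
  induction M with
  | var n => simp [nxt] at h
  | lam M => simp [nxt] at h
  | app N L ihN ihL =>
    by_cases hN : N.isVal = true
    · by_cases hL : L.isVal = true
      · cases N with
        | lam P =>
          simp only [nxt, hN, hL, redex, if_true]
          exact .beta ((isVal_iff _).1 hL)
        | var n => simp [nxt, hN, hL, redex] at h
        | app _ _ => simp [Term.isVal] at hN
        | choice _ _ => simp [Term.isVal] at hN
      · simp only [nxt, hN, hL, if_true] at h ⊢
        exact .appR ((isVal_iff _).1 hN) (ihL (by simpa using h))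
    · simp only [nxt, hN] at h ⊢
      exact .appL (ihN (by simpa using h))
  | choice N L ihN ihL =>
    by_cases hN : N.isVal = true
    · by_cases hL : L.isVal = true
      · simp only [nxt, hN, hL, if_true]
        exact .choice ((isVal_iff _).1 hN) ((isVal_iff _).1 hL)
      · simp only [nxt, hN, hL, if_true] at h ⊢
        exact .choiceR ((isVal_iff _).1 hN) (ihL (by simpa using h))
    · simp only [nxt, hN] at h ⊢
      exact .choiceL (ihN (by simpa using h))

/-- Average of `f` over a list. -/
noncomputable def avg (l : List Term) (f : Term → ℝ≥0∞) : ℝ≥0∞ :=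
  (l.map f).sum / (l.length : ℝ≥0∞)

theorem avg_map (l : List Term) (g : Term → Term) (f : Term → ℝ≥0∞) :
    avg (l.map g) f = avg l (fun X => f (g X)) := by
  simp [avg, Function.comp_def]

theorem avg_mono (l : List Term) {f g : Term → ℝ≥0∞} (h : ∀ X, f X ≤ g X) :
    avg l f ≤ avg l g := by
  unfold avg
  gcongr
  exact List.sum_le_sum (fun i _ => h i)

theorem avg_le (l : List Term) {f : Term → ℝ≥0∞} {c : ℝ≥0∞} (h : ∀ X, f X ≤ c) :
    avg l f ≤ c := by
  unfold avg
  apply ENNReal.div_le_of_le_mul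
  rw [mul_comm]
  have := List.sum_le_card_nsmul (l.map f) c (by simpa using fun X _ => h X)
  simpa using this

theorem avg_tsum (l : List Term) (f : Term → Term → ℝ≥0∞) :
    avg l (fun N => ∑' X, f N X) = ∑' X, avg l (fun N => f N X) := by
  simp only [avg, div_eq_mul_inv, ENNReal.tsum_mul_right]
  congr 1
  induction l with
  | nil => simp
  | cons a l ih => simp only [List.map_cons, List.sum_cons, ih, ENNReal.tsum_add]

theorem avg_mul (l : List Term) (f : Term → ℝ≥0∞) (c : ℝ≥0∞) :
    avg l (fun N => f N * c) = avg l f * c := by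
  simp only [avg, List.sum_map_mul_right, div_eq_mul_inv]
  ring

theorem avg_iSup (l : List Term) (f : ℕ → Term → ℝ≥0∞) (hf : Monotone f) :
    avg l (fun N => ⨆ n, f n N) = ⨆ n, avg l (f n) := by
  simp only [avg, div_eq_mul_inv, ← ENNReal.iSup_mul]
  congr 1
  induction l with
  | nil => simp
  | cons a l ih =>
    simp only [List.map_cons, List.sum_cons, ih]
    refine ENNReal.iSup_add_iSup_of_monotone (fun i j h => hf h a) (fun i j h => ?_)
    exact List.sum_le_sum (fun x _ => hf h x)

theorem avg_eq_fin (l : List Term) (f : Term → ℝ≥0∞) :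
    avg l f = (∑ i : Fin l.length, f (l.get i)) / (l.length : ℝ≥0∞) := by
  unfold avg
  congr 1
  induction l with
  | nil => simp
  | cons a l ih =>
    rw [List.map_cons, List.sum_cons, ih]
    exact (Fin.sum_univ_succ (fun i : Fin (l.length + 1) => f ((a :: l).get i))).symm

/-- Step-indexed evaluation. -/
noncomputable def ev : ℕ → Term → PDist
  | 0, _ => fun _ => 0
  | n + 1, M => fun W => if M.isVal then dirac M W else avg (nxt M) (fun N => ev n N W)

theorem ev_le_succ (n : ℕ) (M W : Term) : ev n M W ≤ ev (n + 1) M W := by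
  induction n generalizing M with
  | zero => simp [ev]
  | succ n ih =>
    by_cases h : M.isVal = true
    · simp [ev, h]
    · rw [ev, ev]
      simp only [h]
      exact avg_mono _ (fun X => ih X)

theorem ev_mono (M W : Term) : Monotone (fun n => ev n M W) :=
  monotone_nat_of_le_succ (fun n => ev_le_succ n M W)

/-- The limit semantics. -/
noncomputable def Sem (M : Term) : PDist := fun W => ⨆ n, ev n M W

theorem ev_le_Sem (n : ℕ) (M W : Term) : ev n M W ≤ Sem M W := le_iSup (fun n => ev n M W) n

theorem Sem_eq (M W : Term) :
    Sem M W = if M.isVal then dirac M W else avg (nxt M) (fun N => Sem N W) := by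
  have h0 : Sem M W = ⨆ n, ev (n + 1) M W := ((ev_mono M W).iSup_nat_add 1).symm
  rw [h0]
  by_cases h : M.isVal = true
  · simp [ev, h]
  · simp only [ev, h]
    exact (avg_iSup _ (fun n N => ev n N W) (fun i j hij N => ev_mono N W hij)).symm

theorem Sem_val {M : Term} (h : M.isVal = true) : Sem M = dirac M := by
  funext W
  rw [Sem_eq, if_pos h]

theorem Sem_nval {M : Term} (h : ¬ M.isVal = true) (W : Term) :
    Sem M W = avg (nxt M) (fun N => Sem N W) := by
  rw [Sem_eq, if_neg h]

theorem avg_zero (l : List Term) : avg l (fun _ => 0) = 0 :=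
  le_antisymm (avg_le l (fun _ => le_rfl)) bot_le

theorem ev_nval (n : ℕ) (M W : Term) (hW : ¬ W.isVal = true) : ev n M W = 0 := by
  induction n generalizing M with
  | zero => rfl
  | succ n ih =>
    rw [ev]
    simp only [ih, avg_zero]
    by_cases h : M.isVal = true
    · have : W ≠ M := by rintro rfl; exact hW h
      simp [dirac, this]
    · simp [h]

theorem Sem_supp (M W : Term) (hW : ¬ W.isVal = true) : Sem M W = 0 := by
  simp [Sem, ev_nval _ _ _ hW]

theorem tsum_iSup {f : ℕ → Term → ℝ≥0∞} (hf : ∀ X, Monotone (fun n => f n X)) :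
    ∑' X, ⨆ n, f n X = ⨆ n, ∑' X, f n X := by
  simp only [ENNReal.tsum_eq_iSup_sum]
  rw [iSup_comm]
  congr 1
  funext s
  exact ENNReal.finsetSum_iSup_of_monotone (fun X => hf X)

theorem dsum_dirac (M : Term) : dsum (dirac M) = 1 := by
  simp [dsum, dirac]

theorem ev_mass (n : ℕ) (M : Term) : dsum (ev n M) ≤ 1 := by
  induction n generalizing M with
  | zero => simp [dsum, ev]
  | succ n ih =>
    by_cases h : M.isVal = true
    · have : ev (n + 1) M = dirac M := by funext W; simp [ev, h]
      rw [this, dsum_dirac]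
    · have : dsum (ev (n + 1) M) = avg (nxt M) (fun N => dsum (ev n N)) := by
        simp only [dsum, ev, h]
        exact (avg_tsum _ _).symm
      rw [this]
      exact avg_le _ (fun N => ih N)

theorem Sem_dist (M : Term) : IsDist (Sem M) := by
  refine ⟨fun W hW => ?_, ?_⟩
  · rw [← isVal_iff]
    by_contra h
    exact hW (Sem_supp M W h)
  · unfold dsum Sem
    rw [tsum_iSup (fun X => ev_mono M X)]
    exact iSup_le (fun n => ev_mass n M)

theorem tsum_dirac (M : Term) (f : Term → ℝ≥0∞) : ∑' X, dirac M X * f X = f M := by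
  rw [tsum_eq_single M]
  · simp [dirac]
  · intro b hb
    simp [dirac, hb]

theorem Sem_bind (C : Term → Term) (hv : ∀ N, ¬ N.isVal = true → ¬ (C N).isVal = true)
    (hn : ∀ N, ¬ N.isVal = true → nxt (C N) = (nxt N).map C) (N W : Term) :
    Sem (C N) W = ∑' X, Sem N X * Sem (C X) W := by
  apply le_antisymm
  · refine iSup_le (fun n => ?_)
    induction n generalizing N with
    | zero => simp [ev]
    | succ n ih =>
      by_cases h : N.isVal = true
      · rw [Sem_val h, tsum_dirac]
        exact ev_le_Sem _ _ _
      · simp only [ev, hv N h, hn N h, avg_map, Sem_nval h]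
        simp only [← avg_mul]
        rw [← avg_tsum]
        exact avg_mono _ (fun X => ih X)
  · have key : ∀ n N, ∑' X, ev n N X * Sem (C X) W ≤ Sem (C N) W := by
      intro n
      induction n with
      | zero => intro N; simp [ev]
      | succ n ih =>
        intro N
        by_cases h : N.isVal = true
        · simp only [ev, h, if_true, tsum_dirac, le_refl]
        · rw [Sem_nval (hv N h), hn N h, avg_map]
          simp only [ev, h, Bool.false_eq_true, if_false, ← avg_mul]
          refine le_trans (le_of_eq (avg_tsum _ _).symm) ?_
          exact avg_mono _ (fun X => ih X)
    calc ∑' X, Sem N X * Sem (C X) W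
        = ∑' X, ⨆ n, ev n N X * Sem (C X) W := by simp only [Sem, ENNReal.iSup_mul]
      _ = ⨆ n, ∑' X, ev n N X * Sem (C X) W :=
          tsum_iSup (fun X i j h => mul_le_mul_left (ev_mono N X h) _)
      _ ≤ Sem (C N) W := iSup_le (fun n => key n N)

theorem Conv_ev (n : ℕ) (M : Term) : Conv RedV M (ev n M) := by
  induction n generalizing M with
  | zero => exact .bot M
  | succ n ih =>
    by_cases h : M.isVal = true
    · have : ev (n + 1) M = dirac M := by funext W; simp [ev, h]
      rw [this]
      exact .val ((isVal_iff _).1 h)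
    · by_cases h0 : nxt M = []
      · have : ev (n + 1) M = dzero := by funext W; simp [ev, h, h0, avg, dzero]
        rw [this]
        exact .bot M
      · have : ev (n + 1) M = fun W =>
            (∑ i, ev n ((nxt M).get i) W) / ((nxt M).length : ℝ≥0∞) := by
          funext W
          rw [← avg_eq_fin (nxt M) (fun N => ev n N W)]
          simp [ev, h]
        rw [this]
        exact .step (fun i => ev n ((nxt M).get i)) (nxt_RedV M h0) (fun i => ih _)

theorem Conv_le {M : Term} {D : PDist} (h : Conv RedV M D) : ∀ W, D W ≤ Sem M W := by
  induction h with
  | bot M => intro W; exact bot_le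
  | val hV => intro W; rw [Sem_val ((isVal_iff _).2 hV)]
  | @step M Ns Ds hr _ ih =>
    intro W
    obtain ⟨h1, h2⟩ := RedV_nxt hr
    have hnv : ¬ M.isVal = true := fun hc => h2 (h1 ▸ nxt_val hc)
    rw [Sem_nval hnv, h1, avg_eq_fin]
    exact ENNReal.div_le_div_right (Finset.sum_le_sum (fun i _ => ih i W)) _

theorem semV_eq (M : Term) : semV M = Sem M := by
  funext W
  apply le_antisymm
  · exact iSup₂_le (fun D hD => Conv_le hD W)
  · refine iSup_le (fun n => ?_)
    exact le_iSup₂ (f := fun (D : PDist) (_ : SmallV M D) => D W) (ev n M) (Conv_ev n M)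

theorem tsum_congr_Sem (N : Term) {f g : Term → ℝ≥0∞}
    (h : ∀ X, X.isVal = true → f X = g X) : ∑' X, Sem N X * f X = ∑' X, Sem N X * g X := by
  refine tsum_congr (fun X => ?_)
  by_cases hX : X.isVal = true
  · rw [h X hX]
  · simp [Sem_supp N X hX]

theorem Sem_app (N L W : Term) :
    Sem (.app N L) W = ∑' P, ∑' V, Sem N (.lam P) * Sem L V * Sem (P.subst 0 V) W := by
  rw [Sem_bind (fun X => .app X L) (by simp [Term.isVal])
    (by intro N h; simp [nxt, h]) N W]
  have hinj : Function.Injective Term.lam := fun a b h => by injection h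
  have h2 : ∀ X, X.isVal = true → Sem (.app X L) W = ∑' V, Sem L V * Sem (.app X V) W := by
    intro X hX
    exact Sem_bind (fun Y => .app X Y) (by simp [Term.isVal])
      (by intro N h; simp [nxt, h, hX]) L W
  have hl : ∀ P, Sem (.app (.lam P) L) W = ∑' V, Sem L V * Sem (P.subst 0 V) W := by
    intro P
    rw [h2 _ rfl]
    refine tsum_congr_Sem L (fun V hV => ?_)
    rw [Sem_nval (by simp [Term.isVal])]
    simp [nxt, hV, isVal_lam, isVal_var, redex, avg]
  rw [← hinj.tsum_eq (f := fun X => Sem N X * Sem (.app X L) W)]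
  · refine tsum_congr (fun P => ?_)
    simp only [hl, ← ENNReal.tsum_mul_left, mul_assoc]
  · intro X hX
    cases X with
    | lam P => exact ⟨P, rfl⟩
    | var n =>
      exfalso
      apply hX
      have : Sem (.app (.var n) L) W = ∑' V, Sem L V * 0 := by
        rw [h2 _ rfl]
        refine tsum_congr_Sem L (fun V hV => ?_)
        rw [Sem_nval (by simp [Term.isVal])]
        simp [nxt, hV, isVal_lam, isVal_var, redex, avg]
      simp [this]
    | app A B => exact absurd (by simp [Sem_supp N (.app A B) (by simp [Term.isVal])]) hX
    | choice A B => exact absurd (by simp [Sem_supp N (.choice A B) (by simp [Term.isVal])]) hX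

theorem dirac_comm (X Y : Term) : dirac X Y = dirac Y X := by
  simp [dirac, eq_comm]

theorem Sem_choice (N L W : Term) :
    Sem (.choice N L) W = (Sem N W * dsum (Sem L) + Sem L W * dsum (Sem N)) / 2 := by
  rw [Sem_bind (fun X => .choice X L) (by simp [Term.isVal])
    (by intro N h; simp [nxt, h]) N W]
  have h2 : ∀ X, X.isVal = true →
      Sem (.choice X L) W = (dirac W X * dsum (Sem L) + Sem L W) / 2 := by
    intro X hX
    rw [Sem_bind (fun Y => .choice X Y) (by simp [Term.isVal])
      (by intro N h; simp [nxt, h, hX]) L W]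
    rw [tsum_congr_Sem L (g := fun Y => (dirac W X + dirac W Y) / 2)]
    · simp only [div_eq_mul_inv, ← mul_assoc, ENNReal.tsum_mul_right, mul_add, ENNReal.tsum_add]
      simp only [mul_comm _ (dirac W _), tsum_dirac]
      rfl
    · intro V hV
      rw [Sem_nval (by simp [Term.isVal])]
      simp [nxt, hX, hV, avg, Sem_val, dirac_comm W]
  rw [tsum_congr_Sem N h2]
  have h3 : ∀ X, Sem N X * ((dirac W X * dsum (Sem L) + Sem L W) / 2)
      = (dirac W X * (Sem N X * dsum (Sem L)) + Sem N X * Sem L W) * 2⁻¹ := by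
    intro X
    rw [div_eq_mul_inv]
    ring
  simp only [h3, ENNReal.tsum_mul_right, ENNReal.tsum_add, tsum_dirac]
  rw [div_eq_mul_inv, mul_comm (Sem L W)]
  rfl

end SemAux


/-- the call-by-value small-step semantics of `M` is itself
derivable in the coinductive call-by-value big-step semantics. -/
theorem bigV_semV (M : Term) (hM : M.Closed) :
    BigV M (semV M) := by
  refine ⟨fun N E => E = semV N, ?_, rfl⟩
  rintro N E rfl
  rw [SemAux.semV_eq]
  refine ⟨SemAux.Sem_dist N, ?_⟩
  cases N with
  | var n => exact Or.inl ⟨.var n, SemAux.Sem_val rfl⟩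
  | lam P => exact Or.inl ⟨.lam P, SemAux.Sem_val rfl⟩
  | app A B =>
    refine Or.inr (Or.inl ⟨A, B, semV A, semV B, fun P V => semV (P.subst 0 V), rfl, rfl, rfl,
      fun _ _ _ _ _ => rfl, ?_⟩)
    funext W
    simp only [SemAux.semV_eq]
    exact SemAux.Sem_app A B W
  | choice A B =>
    refine Or.inr (Or.inr ⟨A, B, semV A, semV B, rfl, rfl, rfl, ?_⟩)
    funext W
    simp only [SemAux.semV_eq]
    exact SemAux.Sem_choice A B W
end

section
/- For every closed term M of Λ⊕, the call-by-value big-step and small-step semantics coincide: ⟪M⟫v = ⟦M⟧v, where ⟪M⟫v is the pointwise infimum of all distributions 𝒟 with M ⇓v 𝒟 and ⟦M⟧v is the pointwise supremum of all distributions 𝒟 with M ⇒v 𝒟. -/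
open scoped ENNReal

/-- Average of `g` over a list of terms. -/
noncomputable def av (g : Term → ℝ≥0∞) (Ns : List Term) : ℝ≥0∞ :=
  (∑ i : Fin Ns.length, g (Ns.get i)) / (Ns.length : ℝ≥0∞)

theorem av_mono {f g : Term → ℝ≥0∞} (h : ∀ N, f N ≤ g N) (Ns : List Term) :
    av f Ns ≤ av g Ns :=
  ENNReal.div_le_div_right (Finset.sum_le_sum fun _ _ => h _) _

theorem av_eq_list (g : Term → ℝ≥0∞) (Ns : List Term) :
    av g Ns = (Ns.map g).sum / (Ns.length : ℝ≥0∞) := by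
  unfold av
  congr 1
  rw [← Fin.sum_univ_fun_getElem]
  rfl

theorem av_map (g : Term → ℝ≥0∞) (C : Term → Term) (Ns : List Term) :
    av g (Ns.map C) = av (fun N => g (C N)) Ns := by
  rw [av_eq_list, av_eq_list, List.map_map, List.length_map]
  rfl

theorem av_mul (f : Term → ℝ≥0∞) (c : ℝ≥0∞) (Ns : List Term) :
    av f Ns * c = av (fun N => f N * c) Ns := by
  unfold av
  rw [← Finset.sum_mul, ENNReal.mul_div_right_comm]

theorem av_tsum {ι : Type*} (f : Term → ι → ℝ≥0∞) (Ns : List Term) :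
    ∑' V, av (fun N => f N V) Ns = av (fun N => ∑' V, f N V) Ns := by
  unfold av
  simp only [div_eq_mul_inv]
  rw [ENNReal.tsum_mul_right, Summable.tsum_finsetSum]
  intros
  exact ENNReal.summable

theorem av_add (f g : Term → ℝ≥0∞) (Ns : List Term) :
    av f Ns + av g Ns = av (fun N => f N + g N) Ns := by
  unfold av
  rw [Finset.sum_add_distrib, ENNReal.add_div]

theorem av_iSup (f : ℕ → Term → ℝ≥0∞) (hf : ∀ N, Monotone fun n => f n N) (Ns : List Term) :
    av (fun N => ⨆ n, f n N) Ns = ⨆ n, av (f n) Ns := by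
  unfold av
  rw [ENNReal.finsetSum_iSup_of_monotone (fun i => hf _), ENNReal.iSup_div]

open Classical in
/-- Small-step approximants. -/
noncomputable def sapp : ℕ → Term → PDist
  | 0, _ => dzero
  | n + 1, M => if M.IsValue then dirac M else
      if h : ∃ Ns, RedV M Ns then fun W => av (fun N => sapp n N W) h.choose else dzero

theorem sapp_value (n : ℕ) {M : Term} (h : M.IsValue) : sapp (n + 1) M = dirac M := by
  rw [sapp, if_pos h]

theorem sapp_red (n : ℕ) {M : Term} {Ns : List Term} (h : RedV M Ns) :
    sapp (n + 1) M = fun W => av (fun N => sapp n N W) Ns := by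
  have h' : ∃ Ns, RedV M Ns := ⟨Ns, h⟩
  rw [sapp, if_neg h.not_value, dif_pos h', h'.choose_spec.det h]

theorem sapp_stuck (n : ℕ) {M : Term} (h : ¬ M.IsValue) (h' : ¬ ∃ Ns, RedV M Ns) :
    sapp (n + 1) M = dzero := by
  rw [sapp, if_neg h, dif_neg h']

theorem sapp_succ (n : ℕ) : ∀ M W, sapp n M W ≤ sapp (n + 1) M W := by
  induction n with
  | zero => intro M W; simp [sapp, dzero]
  | succ n ih =>
    intro M W
    by_cases hv : M.IsValue
    · rw [sapp_value _ hv, sapp_value _ hv]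
    by_cases hr : ∃ Ns, RedV M Ns
    · obtain ⟨Ns, hr⟩ := hr
      rw [sapp_red _ hr, sapp_red _ hr]
      exact av_mono (fun N => ih N W) Ns
    · rw [sapp_stuck _ hv hr, sapp_stuck _ hv hr]

theorem sapp_mono (M W : Term) : Monotone fun n => sapp n M W :=
  monotone_nat_of_le_succ fun n => sapp_succ n M W

theorem sapp_conv (n : ℕ) : ∀ M, SmallV M (sapp n M) := by
  induction n with
  | zero => intro M; exact Conv.bot M
  | succ n ih =>
    intro M
    by_cases hv : M.IsValue
    · rw [sapp_value _ hv]; exact Conv.val hv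
    by_cases hr : ∃ Ns, RedV M Ns
    · obtain ⟨Ns, hr⟩ := hr
      rw [sapp_red _ hr]
      exact Conv.step (fun i => sapp n (Ns.get i)) hr (fun i => ih _)
    · rw [sapp_stuck _ hv hr]; exact Conv.bot M

theorem dirac_tsum (V : Term) (g : Term → ℝ≥0∞) : ∑' U, dirac V U * g U = g V := by
  rw [tsum_eq_single V]
  · simp [dirac]
  · intro U hU; simp [dirac, hU]

theorem dirac_tsum' (V : Term) : ∑' U, dirac V U = 1 := by
  simpa using dirac_tsum V fun _ => 1

theorem sapp_isDist (n : ℕ) : ∀ M, IsDist (sapp n M) := by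
  induction n with
  | zero => intro M; constructor <;> simp [sapp, dzero, dsum]
  | succ n ih =>
    intro M
    by_cases hv : M.IsValue
    · rw [sapp_value _ hv]
      refine ⟨fun U hU => ?_, (dirac_tsum' M).le⟩
      have : U = M := by by_contra h; simp [dirac, h] at hU
      exact this ▸ hv
    by_cases hr : ∃ Ns, RedV M Ns
    · obtain ⟨Ns, hr⟩ := hr
      rw [sapp_red _ hr]
      constructor
      · intro U hU
        by_contra hUv
        apply hU
        have : ∀ N, sapp n N U = 0 := fun N => by
          by_contra h; exact hUv ((ih N).1 U h)
        simp [av, this]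
      · unfold dsum
        rw [av_tsum]
        refine (av_mono (g := fun _ => 1) (fun N => (ih N).2) Ns).trans ?_
        simp [av, ENNReal.div_self_le_one]
    · rw [sapp_stuck _ hv hr]; constructor <;> simp [dzero, dsum]

/-- Limit of the approximants. -/
noncomputable def slim (M : Term) : PDist := fun W => ⨆ n, sapp n M W

theorem slim_value {M : Term} (h : M.IsValue) : slim M = dirac M := by
  funext W
  apply le_antisymm
  · refine iSup_le fun n => (sapp_succ n M W).trans ?_
    rw [sapp_value _ h]
  · refine le_trans ?_ (le_iSup _ 1)
    rw [sapp_value _ h]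

theorem slim_red {M : Term} {Ns : List Term} (h : RedV M Ns) (W : Term) :
    av (fun N => slim N W) Ns ≤ slim M W := by
  unfold slim
  rw [av_iSup (fun n N => sapp n N W) (fun N => sapp_mono N W)]
  refine iSup_le fun n => le_trans ?_ (le_iSup _ (n + 1))
  rw [sapp_red _ h]

theorem tsum_iSup_mono (f : ℕ → Term → ℝ≥0∞) (hf : ∀ V, Monotone fun n => f n V)
    (c : ℝ≥0∞) (h : ∀ n, ∑' V, f n V ≤ c) : ∑' V, ⨆ n, f n V ≤ c := by
  rw [ENNReal.tsum_eq_iSup_sum]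
  refine iSup_le fun s => ?_
  rw [ENNReal.finsetSum_iSup_of_monotone hf]
  exact iSup_le fun n => (ENNReal.sum_le_tsum s).trans (h n)

theorem slim_isDist (M : Term) : IsDist (slim M) := by
  constructor
  · intro U hU
    by_contra hv
    apply hU
    have : ∀ n, sapp n M U = 0 := fun n => by
      by_contra h; exact hv ((sapp_isDist n M).1 U h)
    simp [slim, this]
  · exact tsum_iSup_mono (fun n V => sapp n M V) (sapp_mono M) 1 fun n => (sapp_isDist n M).2

theorem slim_lin (C : Term → Term) (g : Term → ℝ≥0∞) (W : Term)
    (hred : ∀ M Ns, RedV M Ns → RedV (C M) (Ns.map C))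
    (hval : ∀ V, V.IsValue → g V ≤ slim (C V) W) (M : Term) :
    ∑' V, slim M V * g V ≤ slim (C M) W := by
  have key : ∀ n M, ∑' V, sapp n M V * g V ≤ slim (C M) W := by
    intro n
    induction n with
    | zero => intro M; simp [sapp, dzero]
    | succ n ih =>
      intro M
      by_cases hv : M.IsValue
      · rw [sapp_value _ hv, dirac_tsum]; exact hval M hv
      by_cases hr : ∃ Ns, RedV M Ns
      · obtain ⟨Ns, hr⟩ := hr
        rw [sapp_red _ hr]
        simp only [av_mul]
        rw [av_tsum]
        refine (av_mono ih Ns).trans ?_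
        have := slim_red (hred M Ns hr) W
        rwa [av_map] at this
      · rw [sapp_stuck _ hv hr]; simp [dzero]
  unfold slim
  simp only [ENNReal.iSup_mul]
  exact tsum_iSup_mono (fun n V => sapp n M V * g V)
    (fun V => fun a b hab => mul_le_mul_left (sapp_mono M V hab) _) _ fun n => key n M

/-- The big-step functional. -/
noncomputable def bigF (f : Term → PDist) : Term → PDist
  | .var n => dirac (.var n)
  | .lam M => dirac (.lam M)
  | .app N L => fun W => ∑' (P : Term), ∑' (V : Term), f N (.lam P) * f L V * f (P.subst 0 V) W
  | .choice N L => fun W => (f N W * dsum (f L) + f L W * dsum (f N)) / 2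

theorem bigF_mono : Monotone bigF := by
  intro f g h M W
  have h' : ∀ N U, f N U ≤ g N U := fun N U => h N U
  have hs : ∀ N, dsum (f N) ≤ dsum (g N) := fun N => ENNReal.tsum_le_tsum (h' N)
  cases M with
  | var n => exact le_rfl
  | lam M => exact le_rfl
  | app N L =>
    exact ENNReal.tsum_le_tsum fun P => ENNReal.tsum_le_tsum fun V =>
      mul_le_mul' (mul_le_mul' (h' _ _) (h' _ _)) (h' _ _)
  | choice N L =>
    exact ENNReal.div_le_div_right
      (add_le_add (mul_le_mul' (h' _ _) (hs _)) (mul_le_mul' (h' _ _) (hs _))) _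

/-- Least fixed point of the big-step functional. -/
noncomputable def bl : Term → PDist := OrderHom.lfp (⟨bigF, bigF_mono⟩ : (Term → PDist) →o (Term → PDist))

theorem bl_eq : bigF bl = bl :=
  OrderHom.map_lfp (⟨bigF, bigF_mono⟩ : (Term → PDist) →o (Term → PDist))

theorem bl_le {f : Term → PDist} (h : bigF f ≤ f) : bl ≤ f :=
  OrderHom.lfp_le (⟨bigF, bigF_mono⟩ : (Term → PDist) →o (Term → PDist)) h

theorem bl_value {M : Term} (h : M.IsValue) : bl M = dirac M := by
  rw [← bl_eq]
  cases h <;> rfl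

theorem bl_app (N L W : Term) : bl (.app N L) W =
    ∑' (P : Term), ∑' (V : Term), bl N (.lam P) * bl L V * bl (P.subst 0 V) W := by
  conv_lhs => rw [← bl_eq]
  rfl

theorem bl_choice (N L W : Term) : bl (.choice N L) W =
    (bl N W * dsum (bl L) + bl L W * dsum (bl N)) / 2 := by
  conv_lhs => rw [← bl_eq]
  rfl

theorem bl_le_slim : bl ≤ slim := by
  apply bl_le
  intro M W
  cases M with
  | var n => rw [slim_value (.var n)]; exact le_rfl
  | lam M => rw [slim_value (.lam M)]; exact le_rfl
  | app N L =>
    have inner : ∀ P, ∑' V, slim L V * slim (P.subst 0 V) W ≤ slim (.app (.lam P) L) W := by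
      intro P
      refine slim_lin (fun L => .app (.lam P) L) (fun V => slim (P.subst 0 V) W) W
        (fun M Ns h => RedV.appR (.lam P) h) (fun V hV => ?_) L
      refine le_trans (le_of_eq ?_) (slim_red (RedV.beta hV) W)
      simp [av]
    let g : Term → ℝ≥0∞ := fun N => match N with
      | .lam P => ∑' V, slim L V * slim (P.subst 0 V) W
      | _ => 0
    have outer := slim_lin (fun N => .app N L) g W (fun M Ns h => RedV.appL h)
      (fun V hV => by
        cases hV with
        | var n => exact zero_le
        | lam P => exact inner P) N
    refine le_trans ?_ outer
    have hinj : Function.Injective Term.lam := fun a b h => by cases h; rfl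
    refine le_trans (le_of_eq ?_) (ENNReal.tsum_comp_le_tsum_of_injective hinj _)
    refine tsum_congr fun P => ?_
    rw [← ENNReal.tsum_mul_left]
    exact tsum_congr fun V => mul_assoc _ _ _
  | choice N L =>
    have inner : ∀ V, V.IsValue → ∑' U, slim L U * ((dirac V W + dirac U W) / 2)
        ≤ slim (.choice V L) W := by
      intro V hV
      refine slim_lin (fun L => .choice V L) (fun U => (dirac V W + dirac U W) / 2) W
        (fun M Ns h => RedV.choiceR hV h) (fun U hU => ?_) L
      refine le_trans (le_of_eq ?_) (slim_red (RedV.choice hV hU) W)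
      simp [av, Fin.sum_univ_two, slim_value hV, slim_value hU]
    have outer := slim_lin (fun N => .choice N L)
      (fun V => ∑' U, slim L U * ((dirac V W + dirac U W) / 2)) W
      (fun M Ns h => RedV.choiceL h) inner N
    refine le_trans (le_of_eq ?_) outer
    have hd : ∀ f : PDist, ∑' U, f U * dirac U W = f W := by
      intro f
      rw [tsum_eq_single W]
      · simp [dirac]
      · intro U hU; simp [dirac, hU.symm]
    have e1 : ∀ V, ∑' U, slim L U * ((dirac V W + dirac U W) / 2)
        = (dirac V W * dsum (slim L) + slim L W) / 2 := by
      intro V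
      simp only [div_eq_mul_inv, ← mul_assoc, ENNReal.tsum_mul_right, mul_add,
        ENNReal.tsum_add, hd]
      rw [mul_comm (dirac V W)]; rfl
    simp only [e1]
    simp only [div_eq_mul_inv, ← mul_assoc, ENNReal.tsum_mul_right, mul_add,
        ENNReal.tsum_add, hd]
    simp only [bigF, div_eq_mul_inv, dsum]
    rw [mul_comm (slim L W)]

theorem slim_le_sem (M W : Term) : slim M W ≤ semV M W :=
  iSup_le fun n => le_iSup₂_of_le (sapp n M) (sapp_conv n M) le_rfl

theorem bl_red {M : Term} {Ns : List Term} (h : RedV M Ns) :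
    ∀ W, av (fun N => bl N W) Ns = bl M W := by
  induction h with
  | @beta M V hV =>
    intro W
    rw [bl_app, bl_value (.lam M), bl_value hV, tsum_eq_single M]
    · simp only [mul_assoc, ENNReal.tsum_mul_left, dirac_tsum]
      simp [dirac, av]
    · intro P hP; simp [dirac, hP]
  | choice hV hU =>
    intro W
    rw [bl_choice, bl_value hV, bl_value hU]
    simp [av, Fin.sum_univ_two, bl_value hV, bl_value hU, dsum, dirac_tsum']
  | appL h ih =>
    intro W
    rw [av_map]
    simp only [bl_app, ← ih, av_mul, av_tsum]
  | appR hV h ih =>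
    intro W
    rw [av_map]
    simp only [bl_app, ← ih]
    simp only [mul_comm (bl _ (Term.lam _)), av_mul, av_tsum]
  | @choiceL M N Ls h ih =>
    intro W
    have hs : dsum (bl M) = av (fun N => dsum (bl N)) Ls := by
      simp only [dsum, ← ih, av_tsum]
    rw [av_map, bl_choice, ← ih, hs, mul_comm (bl N W), av_mul, av_mul, av_add,
      div_eq_mul_inv, av_mul]
    congr 1
    funext K
    rw [bl_choice, mul_comm (bl N W), div_eq_mul_inv]
  | @choiceR V M Ns hV h ih =>
    intro W
    have hs : dsum (bl M) = av (fun N => dsum (bl N)) Ns := by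
      simp only [dsum, ← ih, av_tsum]
    rw [av_map, bl_choice, ← ih, hs, mul_comm (bl V W), av_mul, av_mul, av_add,
      div_eq_mul_inv, av_mul]
    congr 1
    funext K
    rw [bl_choice, mul_comm (bl V W), div_eq_mul_inv]

theorem conv_le_bl {M : Term} {D : PDist} (h : Conv RedV M D) : ∀ W, D W ≤ bl M W := by
  induction h with
  | bot M => intro W; exact zero_le
  | val hV => intro W; rw [bl_value hV]
  | step Ds hr _ ih =>
    intro W
    rw [← bl_red hr]
    exact ENNReal.div_le_div_right (Finset.sum_le_sum fun i _ => ih i W) _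

theorem sem_le_bl (M W : Term) : semV M W ≤ bl M W :=
  iSup₂_le fun _ h => conv_le_bl h W

theorem bl_eq_sem : bl = semV := by
  funext M W
  exact le_antisymm ((bl_le_slim M W).trans (slim_le_sem M W)) (sem_le_bl M W)

theorem bl_isDist (M : Term) : IsDist (bl M) := by
  have : bl = slim := le_antisymm bl_le_slim
    fun M W => (slim_le_sem M W).trans (sem_le_bl M W)
  rw [this]
  exact slim_isDist M

theorem bl_bigV (M : Term) : BigV M (bl M) := by
  refine ⟨fun N E => E = bl N, ?_, rfl⟩
  rintro N E rfl
  refine ⟨bl_isDist N, ?_⟩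
  cases N with
  | var n => exact .inl ⟨.var n, bl_value (.var n)⟩
  | lam M => exact .inl ⟨.lam M, bl_value (.lam M)⟩
  | app N L =>
    exact .inr (.inl ⟨N, L, bl N, bl L, fun P V => bl (P.subst 0 V), rfl, rfl, rfl,
      fun _ _ _ _ _ => rfl, funext fun W => bl_app N L W⟩)
  | choice N L =>
    exact .inr (.inr ⟨N, L, bl N, bl L, rfl, rfl, rfl, funext fun W => bl_choice N L W⟩)

theorem bl_le_big : bl ≤ bigSemOf BigV := by
  apply bl_le
  intro M W
  refine le_iInf₂ fun D hD => ?_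
  obtain ⟨R, hR, hMD⟩ := hD
  have hle : ∀ N E, R N E → ∀ U, bigSemOf BigV N U ≤ E U := fun N E h U =>
    iInf₂_le_of_le E ⟨R, hR, h⟩ le_rfl
  rcases (hR M D hMD).2 with ⟨hv, rfl⟩ | ⟨N, L, E, F, G, rfl, hE, hF, hG, rfl⟩ |
    ⟨N, L, E, F, rfl, hE, hF, rfl⟩
  · cases hv <;> exact le_rfl
  · refine ENNReal.tsum_le_tsum fun P => ENNReal.tsum_le_tsum fun V => ?_
    have h1 := hle N E hE (.lam P)
    have h2 := hle L F hF V
    by_cases e0 : E (.lam P) = 0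
    · rw [e0] at h1
      simp [nonpos_iff_eq_zero.mp h1]
    by_cases f0 : F V = 0
    · rw [f0] at h2
      simp [nonpos_iff_eq_zero.mp h2]
    exact mul_le_mul' (mul_le_mul' h1 h2)
      (hle _ _ (hG P V e0 ((hR L F hF).1.1 V f0) f0) W)
  · have h1 := hle N E hE
    have h2 := hle L F hF
    exact ENNReal.div_le_div_right
      (add_le_add (mul_le_mul' (h1 W) (ENNReal.tsum_le_tsum h2))
        (mul_le_mul' (h2 W) (ENNReal.tsum_le_tsum h1))) _

/-- the call-by-value big-step and small-step semantics
coincide. -/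
theorem bigSemV_eq_semV (M : Term) (hM : M.Closed) :
    bigSemOf BigV M = semV M := by
  rw [← bl_eq_sem]
  funext W
  exact le_antisymm (iInf₂_le_of_le (bl M) (bl_bigV M) le_rfl) (bl_le_big M W)
end

section
/- For every closed term M of Λ⊕, if M ⇓div,n p and M ⇒n 𝒟, then p + Σ𝒟 ≤ 1. -/
open scoped ENNReal

theorem redN_not_value {M : Term} {Ns : List Term} (h : RedN M Ns) : ¬ M.IsValue := by
  intro hv
  cases hv <;> cases h

theorem redN_det {M : Term} {Ns : List Term} (h : RedN M Ns) :
    ∀ Ns', RedN M Ns' → Ns = Ns' := by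
  induction h with
  | beta =>
    intro Ns' h'
    cases h' with
    | beta => rfl
    | appL h => cases h
  | choice =>
    intro Ns' h'
    cases h'
    rfl
  | appL h ih =>
    intro Ns' h'
    cases h' with
    | beta => cases h
    | appL h2 => rw [ih _ h2]

theorem div_conv_aux (R : Term → ℝ≥0∞ → Prop)
    (hR : ∀ N q, R N q → q ≤ 1 ∧ DivStep RedN R N q) {M : Term} {D : PDist}
    (h : Conv RedN M D) : ∀ p, R M p → p + dsum D ≤ 1 := by
  induction h with
  | bot M =>
    intro p hp
    simpa [dsum, dzero] using (hR _ _ hp).1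
  | @val V hV =>
    intro p hp
    rcases (hR _ _ hp).2 with ⟨_, h0⟩ | ⟨Ns, ps, hred, _⟩
    · subst h0
      simp [dsum, dirac]
    · exact absurd hV (redN_not_value hred)
  | @step M Ns Ds hred _ ih =>
    intro p hp
    rcases (hR _ _ hp).2 with ⟨hv, _⟩ | ⟨Ns', ps, hred', hps, rfl⟩
    · exact absurd hv (redN_not_value hred)
    · obtain rfl := redN_det hred _ hred'
      have h1 : dsum (fun W => (∑ i, Ds i W) / (Ns.length : ℝ≥0∞))
          = (∑ i, dsum (Ds i)) / (Ns.length : ℝ≥0∞) := by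
        simp only [dsum, div_eq_mul_inv]
        rw [ENNReal.tsum_mul_right, Summable.tsum_finsetSum (fun _ _ => ENNReal.summable)]
      rw [h1, ← ENNReal.add_div, ← Finset.sum_add_distrib]
      apply ENNReal.div_le_of_le_mul
      calc ∑ i, (ps i + dsum (Ds i)) ≤ ∑ _i : Fin Ns.length, (1 : ℝ≥0∞) :=
            Finset.sum_le_sum (fun i _ => ih i _ (hps i))
        _ = 1 * (Ns.length : ℝ≥0∞) := by simp

/-- divergence and convergence probabilities together never
exceed `1`, call-by-name. -/
theorem divN_add_conv_le_one (M : Term) (hM : M.Closed) (p : ℝ≥0∞) (D : PDist)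
    (hdiv : DivN M p) (hconv : SmallN M D) :
    p + dsum D ≤ 1 := by
  obtain ⟨R, hR, hp⟩ := hdiv
  exact div_conv_aux R hR hconv p hp
end
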